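/- Let g be a vector space over a field k, δ : g → g ⊗ g a linear map such that δ = −τ ∘ δ (τ the flip of g ⊗ g) and (id + σ + σ²) ∘ (id ⊗ δ) ∘ δ = 0 (σ the cyclic permutation x ⊗ y ⊗ z ↦ y ⊗ z ⊗ x of g ⊗ g ⊗ g), and let S : g → g be a linear map satisfying (S ⊗ S)(δ(x)) = (S ⊗ id + id ⊗ S)(δ(S x)) − δ(S² x) for all x ∈ g (a Nijenhuis Lie coalgebra). Then the dual space g* with the bracket [α, β](x) := (α ⊗ β)(δ(x)) is a Lie algebra, and the transpose S* : g* → g* is a Nijenhuis operator on it, i.e. (g*, [·,·], S*) is a Nijenhuis Lie algebra. -/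

import Mathlib

open TensorProduct

noncomputable section

/-- The cyclic permutation `x ⊗ y ⊗ z ↦ y ⊗ z ⊗ x` on `g ⊗ (g ⊗ g)`. -/
def cyc (K : Type*) [Field K] (g : Type*) [AddCommGroup g] [Module K g] :
    g ⊗[K] (g ⊗[K] g) →ₗ[K] g ⊗[K] (g ⊗[K] g) :=
  (LinearMap.lTensor g (TensorProduct.comm K g g).toLinearMap) ∘ₗ
    (TensorProduct.leftComm K g g g).toLinearMap

/-- The bracket on the dual `g*` induced by a coproduct `δ`: `[α, β](x) = (α ⊗ β)(δ x)`. -/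
def dualBracket {K : Type*} [Field K] {g : Type*} [AddCommGroup g] [Module K g]
    (δ : g →ₗ[K] g ⊗[K] g) (α β : Module.Dual K g) : Module.Dual K g :=
  (TensorProduct.lid K K).toLinearMap ∘ₗ (TensorProduct.map α β) ∘ₗ δ

/-!
The bracket of functionals `α`, `β` at `x` is the value of `α ⊗ β` on `δ x`, so each identity on
the dual is a co-identity on `g` tested against a tensor product of functionals. Antisymmetry is
`hanti` tested against `α ⊗ β`, and the Nijenhuis identity is `hS` tested against `α ⊗ β`. For
Jacobi, the iterated bracket `[α, [β, γ]]` is `α ⊗ β ⊗ γ` evaluated on `(id ⊗ δ) ∘ δ`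
(`dualBracket_dualBracket_apply`), and precomposing `α ⊗ β ⊗ γ` with the cyclic permutation gives
`γ ⊗ α ⊗ β` (`tripleEval_cyc`); co-Jacobi therefore gives the cyclic sum of the `[α, [β, γ]]`, and
antisymmetry turns it into the cyclic sum of the `[[α, β], γ]`.
-/

section

variable {K : Type*} [Field K] {g : Type*} [AddCommGroup g] [Module K g]

/-- The functional `x ⊗ y ↦ α x * β y` on `g ⊗ g` induced by `α` and `β`. -/
def pairEval (α β : Module.Dual K g) : g ⊗[K] g →ₗ[K] K :=
  (TensorProduct.lid K K).toLinearMap ∘ₗ TensorProduct.map α β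

/-- The functional `x ⊗ (y ⊗ z) ↦ α x * (β y * γ z)` on `g ⊗ (g ⊗ g)`. -/
def tripleEval (α β γ : Module.Dual K g) : g ⊗[K] (g ⊗[K] g) →ₗ[K] K :=
  (TensorProduct.lid K K).toLinearMap ∘ₗ TensorProduct.map α (pairEval β γ)

lemma dualBracket_apply (δ : g →ₗ[K] g ⊗[K] g) (α β : Module.Dual K g) (x : g) :
    dualBracket δ α β x = pairEval α β (δ x) := rfl

lemma pairEval_comm (α β : Module.Dual K g) (t : g ⊗[K] g) :
    pairEval α β (TensorProduct.comm K g g t) = pairEval β α t := by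
  induction t with
  | zero => simp
  | add a b ha hb => simp only [map_add, ha, hb]
  | tmul a b => simp [pairEval, mul_comm]

lemma pairEval_map (α β : Module.Dual K g) (S T : g →ₗ[K] g) (t : g ⊗[K] g) :
    pairEval α β (TensorProduct.map S T t) = pairEval (α ∘ₗ S) (β ∘ₗ T) t := by
  simp [pairEval, TensorProduct.map_comp]

lemma tripleEval_cyc (α β γ : Module.Dual K g) (t : g ⊗[K] (g ⊗[K] g)) :
    tripleEval α β γ (cyc K g t) = tripleEval γ α β t := by
  induction t with
  | zero => simp
  | add a b ha hb => simp only [map_add, ha, hb]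
  | tmul a t =>
    induction t with
    | zero => simp
    | add b c hb hc => simp only [TensorProduct.tmul_add, map_add, hb, hc]
    | tmul b c =>
      simp [tripleEval, pairEval, cyc]
      ring

lemma dualBracket_dualBracket_apply (δ : g →ₗ[K] g ⊗[K] g) (α β γ : Module.Dual K g) (x : g) :
    dualBracket δ α (dualBracket δ β γ) x =
      tripleEval α β γ (LinearMap.lTensor g δ (δ x)) := by
  rw [dualBracket_apply]
  generalize δ x = t
  induction t with
  | zero => simp
  | add a b ha hb => simp only [map_add, ha, hb]
  | tmul a b => simp [tripleEval, pairEval, dualBracket]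

end

/-- If `(g, δ, S)` is a Nijenhuis Lie coalgebra, then `(g*, [·,·], S*)` is a Nijenhuis Lie
algebra: the dual bracket is antisymmetric, satisfies the Jacobi identity, and the
transpose `S*` is a Nijenhuis operator on it. -/
theorem dual_of_nijenhuis_lie_coalgebra
    {K : Type*} [Field K] {g : Type*} [AddCommGroup g] [Module K g]
    (δ : g →ₗ[K] g ⊗[K] g)
    (hanti : ∀ x : g, δ x = - (TensorProduct.comm K g g) (δ x))
    (hcojac : ∀ x : g,
      (LinearMap.lTensor g δ) (δ x) + cyc K g ((LinearMap.lTensor g δ) (δ x)) +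
        cyc K g (cyc K g ((LinearMap.lTensor g δ) (δ x))) = 0)
    (S : g →ₗ[K] g)
    (hS : ∀ x : g,
      TensorProduct.map S S (δ x) =
        (LinearMap.rTensor g S + LinearMap.lTensor g S) (δ (S x)) - δ (S (S x))) :
    (∀ α β : Module.Dual K g, dualBracket δ α β = - dualBracket δ β α) ∧
    (∀ α β γ : Module.Dual K g,
      dualBracket δ (dualBracket δ α β) γ + dualBracket δ (dualBracket δ β γ) α +
        dualBracket δ (dualBracket δ γ α) β = 0) ∧
    (∀ α β : Module.Dual K g,
      dualBracket δ (α ∘ₗ S) (β ∘ₗ S) =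
        (dualBracket δ (α ∘ₗ S) β + dualBracket δ α (β ∘ₗ S) -
          (dualBracket δ α β) ∘ₗ S) ∘ₗ S) := by
  have anti : ∀ α β : Module.Dual K g, dualBracket δ α β = - dualBracket δ β α := by
    intro α β
    ext x
    rw [LinearMap.neg_apply, dualBracket_apply, dualBracket_apply, hanti x, map_neg,
      pairEval_comm, ← hanti x]
  refine ⟨anti, fun α β γ => ?_, fun α β => ?_⟩
  · ext x
    have h := congrArg (tripleEval α β γ) (hcojac x)
    simp only [map_add, map_zero, tripleEval_cyc, ← dualBracket_dualBracket_apply] at h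
    rw [anti (dualBracket δ α β) γ, anti (dualBracket δ β γ) α, anti (dualBracket δ γ α) β]
    simp only [LinearMap.add_apply, LinearMap.neg_apply, LinearMap.zero_apply]
    linear_combination -h
  · ext x
    have h := congrArg (pairEval α β) (hS x)
    simp only [LinearMap.add_apply, map_add, map_sub, LinearMap.rTensor, LinearMap.lTensor,
      pairEval_map, LinearMap.comp_id] at h
    simpa only [LinearMap.comp_apply, LinearMap.add_apply, LinearMap.sub_apply,
      dualBracket_apply] using h

end
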